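/- Let P = (x̂, ŷ) be a proper rational parametrization of the curve E(x,y) = 0, and let s* ∈ ℂ with x* := x̂(s*) ≠ ∞. Then there exists a finite-valued function φ such that ŷ = φ∘x̂ holds in a neighborhood of s* if and only if s* is not a critical point of P (i.e. x̂′(s*) ≠ 0 and ŷ(s*) ≠ ∞); and in that case φ is analytic at x*. -/

import Mathlib

open Polynomial

/-- A rational map of the Riemann sphere, given by a pair of coprime polynomials. -/
structure RationalMap where
  num : Polynomial ℂ
  den : Polynomial ℂ
  den_ne_zero : den ≠ 0
  coprime : IsCoprime num den

namespace RationalMap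

/-- The finite-valued function `s ↦ num(s)/den(s)` (junk value `0` at poles). -/
noncomputable def toFun (f : RationalMap) (s : ℂ) : ℂ := f.num.eval s / f.den.eval s

/-- Evaluation as a map to the Riemann sphere `ℂ ∪ {∞}`. -/
noncomputable def eval (f : RationalMap) (s : ℂ) : OnePoint ℂ :=
  if f.den.eval s = 0 then OnePoint.infty else ((f.toFun s : ℂ) : OnePoint ℂ)

/-- The value of the rational map at the point `∞` of the Riemann sphere. -/
noncomputable def evalInf (f : RationalMap) : OnePoint ℂ :=
  if f.den.degree < f.num.degree then OnePoint.infty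
  else ((f.num.coeff f.den.natDegree / f.den.leadingCoeff : ℂ) : OnePoint ℂ)

/-- A rational map is real if (after clearing a common constant) its numerator and
denominator can be written with real coefficients. -/
def IsReal (f : RationalMap) : Prop :=
  ∃ (c : ℂ) (P Q : Polynomial ℝ), c ≠ 0 ∧
    c • f.num = P.map (algebraMap ℝ ℂ) ∧ c • f.den = Q.map (algebraMap ℝ ℂ)

end RationalMap

/-- Evaluation of a bivariate polynomial `E` at `(x,y)`. -/
noncomputable def evalE (E : MvPolynomial (Fin 2) ℂ) (x y : ℂ) : ℂ :=
  MvPolynomial.eval ![x, y] E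

/-- `(X,Y)` is a rational parametrization of the curve `E(x,y) = 0`:
`E(X(s), Y(s)) = 0` for all but finitely many `s ∈ ℂ`. -/
def IsParametrization (E : MvPolynomial (Fin 2) ℂ) (X Y : RationalMap) : Prop :=
  Set.Finite {s : ℂ |
    ¬ (X.den.eval s ≠ 0 ∧ Y.den.eval s ≠ 0 ∧ evalE E (X.toFun s) (Y.toFun s) = 0)}

/-- The parametrization `(X,Y)` is proper: for all but finitely many points `(x,y)` on the
curve, the equation `(X(s), Y(s)) = (x,y)` has exactly one solution `s ∈ ℂ`. -/
def IsProper (E : MvPolynomial (Fin 2) ℂ) (X Y : RationalMap) : Prop :=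
  Set.Finite {P : ℂ × ℂ | evalE E P.1 P.2 = 0 ∧
    ¬ ∃! s : ℂ, X.eval s = ((P.1 : ℂ) : OnePoint ℂ) ∧ Y.eval s = ((P.2 : ℂ) : OnePoint ℂ)}

/-- `s` is a critical point of the parametrization `(X,Y)` if `X′(s) = 0` (as a rational
function, i.e. the numerator `num′·den − num·den′` of the derivative vanishes at `s`) or
`Y(s) = ∞`. -/
def IsCriticalPt (X Y : RationalMap) (s : ℂ) : Prop :=
  (X.num.derivative * X.den - X.num * X.den.derivative).eval s = 0 ∨ Y.den.eval s = 0

/-!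
A nonempty plane curve over `ℂ` has infinitely many points, and `P` misses only finitely many of
them, so `P` is not constant and its fibres are finite. Discarding the finitely many `s` that
lie over points violating properness, `P` is injective. If `ŷ = φ ∘ x̂` near `s*`, then `x̂`
alone separates the same points as `P`, so `x̂` is injective on a punctured neighborhood of
`s*`. A holomorphic function whose derivative vanishes there is not: up to a change of
coordinate and an additive constant it is `0` or `w ^ n` with `n ≥ 2`, which takes the same
value at `w` and `ζ w` for an `n`-th root of unity `ζ`. Conversely, if `x̂′(s*) ≠ 0`, then `x̂`
has an analytic local inverse, and `φ` is `ŷ` composed with it.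
-/

open Filter Topology Set

theorem exists_analyticAt_pow_eq {E : Type*} [NormedAddCommGroup E] [NormedSpace ℂ E] {g : E → ℂ}
    {z : E} (hg : AnalyticAt ℂ g z) (hgz : g z ≠ 0) {n : ℕ} (hn : n ≠ 0) :
    ∃ k : E → ℂ, AnalyticAt ℂ k z ∧ ∀ w, k w ^ n = g w := by
  obtain ⟨c, hc⟩ := IsAlgClosed.exists_pow_nat_eq (g z) (Nat.pos_of_ne_zero hn)
  -- Dividing by `g z` moves the base point of the principal branch to `1`, off its cut.
  refine ⟨fun w ↦ c * (g w / g z) ^ (n⁻¹ : ℂ), ?_, fun w ↦ ?_⟩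
  · exact analyticAt_const.mul <|
      (hg.div analyticAt_const hgz).cpow analyticAt_const (by simp [hgz])
  · rw [mul_pow, Complex.cpow_nat_inv_pow _ hn, hc, mul_div_cancel₀ _ hgz]

theorem exists_eventually_eq_add_pow {f : ℂ → ℂ} {z : ℂ} (hf : AnalyticAt ℂ f z)
    (hconst : ¬ ∀ᶠ w in 𝓝 z, f w = f z) :
    ∃ n ≠ 0, ∃ h : ℂ → ℂ, AnalyticAt ℂ h z ∧ h z = 0 ∧ deriv h z ≠ 0 ∧
      ∀ᶠ w in 𝓝 z, f w = f z + h w ^ n := by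
  obtain ⟨n, g, hg, hgz, hfg⟩ :=
    (hf.sub analyticAt_const).exists_eventuallyEq_pow_smul_nonzero_iff.mpr
      (by simpa only [Pi.sub_apply, sub_eq_zero] using hconst)
  have hn : n ≠ 0 := by
    rintro rfl
    simpa [hgz] using hfg.self_of_nhds.symm
  obtain ⟨k, hk, hkg⟩ := exists_analyticAt_pow_eq hg hgz hn
  have hkz : k z ≠ 0 := by
    intro hkz
    rw [← hkg, hkz, zero_pow hn] at hgz
    exact hgz rfl
  have hderiv : HasDerivAt (fun w ↦ (w - z) * k w) (k z) z := by
    simpa using ((hasDerivAt_id' z).sub_const z).fun_mul hk.differentiableAt.hasDerivAt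
  refine ⟨n, hn, fun w ↦ (w - z) * k w, (analyticAt_id.sub analyticAt_const).mul hk, by simp,
    hderiv.deriv ▸ hkz, ?_⟩
  filter_upwards [hfg] with w hw
  rw [mul_pow, hkg, ← smul_eq_mul, ← hw, Pi.sub_apply, add_sub_cancel]

theorem eq_one_of_injOn_pow {h : ℂ → ℂ} {h' z : ℂ} (hh : HasStrictDerivAt h h' z) (hh' : h' ≠ 0)
    (hz : h z = 0) {n : ℕ} (hn : n ≠ 0) {U : Set ℂ} (hU : U ∈ 𝓝[≠] z)
    (hinj : InjOn (fun w ↦ h w ^ n) U) : n = 1 := by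
  let ζ : ℂ := Complex.exp (2 * Real.pi * Complex.I / n)
  have hζ : IsPrimitiveRoot ζ n := Complex.isPrimitiveRoot_exp n hn
  have himage : ∀ᶠ w in 𝓝 0, w ≠ 0 → w ∈ h '' U := by
    rw [← hz, ← hh.map_nhds_eq hh', eventually_map]
    filter_upwards [eventually_nhdsWithin_iff.mp hU] with t ht hne
    exact mem_image_of_mem h (ht (ne_of_apply_ne h hne))
  have hrot : Tendsto (ζ * ·) (𝓝 0) (𝓝 0) := by
    simpa using (continuous_const_mul ζ).tendsto 0
  obtain ⟨w, ⟨hw, hζw⟩, hw0⟩ :=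
    ((himage.and (hrot.eventually himage)).filter_mono nhdsWithin_le_nhds
      |>.and (self_mem_nhdsWithin (a := (0 : ℂ)) (s := {0}ᶜ))).exists
  obtain ⟨u, hu, rfl⟩ := hw hw0
  obtain ⟨v, hv, hvu⟩ := hζw (mul_ne_zero (hζ.ne_zero hn) hw0)
  have huv : u = v := hinj hu hv (by simp only [hvu, mul_pow, hζ.pow_eq_one, one_mul])
  have hζ1 : ζ = 1 := mul_right_cancel₀ hw0 (by rw [← hvu, huv, one_mul])
  exact hζ.eq_orderOf.trans (by rw [hζ1, orderOf_one])

theorem not_eventually_eq_const_of_injOn {α β : Type*} [TopologicalSpace α] [T1Space α] {f : α → β}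
    {z : α} [(𝓝[≠] z).NeBot] {U : Set α} (hU : U ∈ 𝓝[≠] z) (hinj : InjOn f U) (c : β) :
    ¬ ∀ᶠ w in 𝓝[≠] z, f w = c := by
  intro hc
  have hfin : (U ∩ {w | f w = c}).Finite :=
    Subsingleton.finite fun u hu v hv ↦ hinj hu.1 hv.1 (hu.2.trans hv.2.symm)
  have hcompl : ∀ᶠ w in 𝓝[≠] z, w ∉ U ∩ {w | f w = c} :=
    nhdsNE_le_cofinite z hfin.compl_mem_cofinite
  obtain ⟨w, hw, hwU, hwc⟩ := (hcompl.and (inter_mem hU hc)).exists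
  exact hw ⟨hwU, hwc⟩

theorem deriv_ne_zero_of_injOn_nhdsNE {f : ℂ → ℂ} {z : ℂ} (hf : AnalyticAt ℂ f z) {U : Set ℂ}
    (hU : U ∈ 𝓝[≠] z) (hinj : InjOn f U) : deriv f z ≠ 0 := by
  obtain ⟨n, hn, h, hh, hhz, hh', hfh⟩ := exists_eventually_eq_add_pow hf fun hc ↦
    not_eventually_eq_const_of_injOn hU hinj (f z) (hc.filter_mono nhdsWithin_le_nhds)
  have hpow : InjOn (fun w ↦ h w ^ n) (U ∩ {w | f w = f z + h w ^ n}) :=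
    fun u hu v hv huv ↦ hinj hu.1 hv.1 (hu.2.trans ((congrArg (f z + ·) huv).trans hv.2.symm))
  obtain rfl : n = 1 := eq_one_of_injOn_pow hh.hasStrictDerivAt hh' hhz hn
    (inter_mem hU (nhdsWithin_le_nhds hfh)) hpow
  simpa [EventuallyEq.deriv_eq hfh] using hh'

theorem exists_eventuallyEq_comp {𝕜 β : Type*} [NontriviallyNormedField 𝕜] [CompleteSpace 𝕜]
    {f : 𝕜 → 𝕜} {f' z : 𝕜} (hf : HasStrictDerivAt f f' z) (hf' : f' ≠ 0) (g : 𝕜 → β) :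
    ∃ φ : 𝕜 → β, g =ᶠ[𝓝 z] φ ∘ f :=
  ⟨g ∘ hf.localInverse f f' z hf',
    (hf.eventually_left_inverse hf').mono fun _ ht ↦ congrArg g ht.symm⟩

section Curve

open scoped Polynomial.Bivariate

theorem infinite_setOfPred_evalEval_eq_zero {K : Type*} [Field K] [IsAlgClosed K] {F : K[X][Y]}
    {a b : K} (hF : F.evalEval a b = 0) : {p : K × K | F.evalEval p.1 p.2 = 0}.Infinite := by
  by_cases hdeg : F.natDegree = 0
  · obtain ⟨c, rfl⟩ := natDegree_eq_zero.mp hdeg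
    refine (infinite_range_of_injective (Prod.mk_right_injective a)).mono ?_
    rintro _ ⟨y, rfl⟩
    rw [evalEval_C] at hF
    exact (evalEval_C a y c).trans hF
  · have hF0 : F ≠ 0 := ne_of_apply_ne natDegree (by rwa [natDegree_zero])
    have hlc : {x | F.leadingCoeff.eval x ≠ 0}.Infinite :=
      (finite_setOfPred_isRoot (leadingCoeff_ne_zero.mpr hF0)).infinite_compl
    refine Infinite.of_image Prod.fst (hlc.mono fun x hx ↦ ?_)
    have hdegx : (F.map (evalRingHom x)).natDegree = F.natDegree :=
      natDegree_map_of_leadingCoeff_ne_zero (evalRingHom x) hx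
    obtain ⟨y, hy⟩ := IsAlgClosed.exists_root (F.map (evalRingHom x))
      (mt natDegree_eq_of_degree_eq_some (hdegx ▸ hdeg))
    exact ⟨(x, y), by rwa [IsRoot, map_evalRingHom_eval] at hy, rfl⟩

theorem eval_equivMvPolynomial {R : Type*} [CommSemiring R] (F : R[X][Y]) (x y : R) :
    MvPolynomial.eval ![x, y] (Bivariate.equivMvPolynomial R F) = F.evalEval x y := by
  have hcomp : (MvPolynomial.aeval ![x, y]).comp (Bivariate.equivMvPolynomial R).toAlgHom =
      aevalAeval x y := by
    ext <;> simp
  rw [← coe_aevalAeval_eq_evalEval, ← hcomp, ← MvPolynomial.coe_aeval_eq_eval]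
  rfl

theorem infinite_setOfPred_evalE_eq_zero {E : MvPolynomial (Fin 2) ℂ} {a b : ℂ}
    (hE : evalE E a b = 0) : {p : ℂ × ℂ | evalE E p.1 p.2 = 0}.Infinite := by
  obtain ⟨F, rfl⟩ := (Bivariate.equivMvPolynomial ℂ).surjective E
  simp only [evalE, eval_equivMvPolynomial] at hE ⊢
  exact infinite_setOfPred_evalEval_eq_zero hE

end Curve

namespace RationalMap

variable (f : RationalMap) {s : ℂ}

theorem eval_eq_coe_iff {a : ℂ} :
    f.eval s = (a : OnePoint ℂ) ↔ f.den.eval s ≠ 0 ∧ f.toFun s = a := by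
  unfold eval
  split_ifs with h <;> simp [h]

theorem analyticAt_toFun (hs : f.den.eval s ≠ 0) : AnalyticAt ℂ f.toFun s :=
  (analyticAt_id.aeval_polynomial f.num).div (analyticAt_id.aeval_polynomial f.den) hs

theorem deriv_toFun (hs : f.den.eval s ≠ 0) :
    deriv f.toFun s =
      (f.num.derivative * f.den - f.num * f.den.derivative).eval s / f.den.eval s ^ 2 := by
  rw [eval_sub, eval_mul, eval_mul]
  exact ((f.num.hasDerivAt s).fun_div (f.den.hasDerivAt s) hs).deriv

theorem eventually_eval_eq_coe_iff {g : ℂ → ℂ} :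
    (∀ᶠ t in 𝓝 s, f.eval t = (g t : OnePoint ℂ)) ↔ f.den.eval s ≠ 0 ∧ f.toFun =ᶠ[𝓝 s] g := by
  simp only [eval_eq_coe_iff, eventually_and]
  exact and_congr_left fun _ ↦
    ⟨Eventually.self_of_nhds, f.den.continuous.continuousAt.eventually_ne⟩

theorem toFun_eq_of_infinite_fiber {c : ℂ} (hc : {t | f.eval t = (c : OnePoint ℂ)}.Infinite)
    (hs : f.den.eval s ≠ 0) : f.toFun s = c := by
  have hzero : f.num - C c * f.den = 0 := by
    refine eq_zero_of_infinite_isRoot _ (hc.mono fun t ht ↦ ?_)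
    obtain ⟨hden, ht⟩ := f.eval_eq_coe_iff.mp ht
    rw [toFun, div_eq_iff hden] at ht
    simp [ht]
  rw [toFun, sub_eq_zero.mp hzero, eval_mul, eval_C, mul_div_cancel_right₀ _ hs]

end RationalMap

theorem isCriticalPt_iff_deriv_toFun_eq_zero {X Y : RationalMap} {s : ℂ} (hX : X.den.eval s ≠ 0) :
    IsCriticalPt X Y s ↔ deriv X.toFun s = 0 ∨ Y.den.eval s = 0 := by
  simp [IsCriticalPt, X.deriv_toFun hX, hX]

section Parametrization

variable {E : MvPolynomial (Fin 2) ℂ} {X Y : RationalMap}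

theorem IsProper.finite_fiber (hprop : IsProper E X Y) (hpar : IsParametrization E X Y)
    (a b : ℂ) : {s | X.eval s = (a : OnePoint ℂ) ∧ Y.eval s = (b : OnePoint ℂ)}.Finite := by
  by_contra hinf
  obtain ⟨t, ht⟩ := hpar.infinite_compl.nonempty
  refine infinite_setOfPred_evalE_eq_zero (not_not.mp ht).2.2
    ((hprop.union (finite_singleton (a, b))).subset fun p hp ↦ ?_)
  by_contra hmem
  simp only [mem_union, mem_ofPred_eq, not_or, not_and, not_not] at hmem
  obtain ⟨s, ⟨hXs, hYs⟩, -⟩ := hmem.1 hp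
  rw [RationalMap.eval_eq_coe_iff] at hXs hYs
  have hXa : X.toFun s = a :=
    X.toFun_eq_of_infinite_fiber (Infinite.mono (fun _ ↦ And.left) hinf) hXs.1
  have hYb : Y.toFun s = b :=
    Y.toFun_eq_of_infinite_fiber (Infinite.mono (fun _ ↦ And.right) hinf) hYs.1
  exact hmem.2 (Prod.ext (hXs.2.symm.trans hXa) (hYs.2.symm.trans hYb))

theorem IsProper.exists_finite_injOn_compl (hprop : IsProper E X Y)
    (hpar : IsParametrization E X Y) :
    ∃ S : Set ℂ, S.Finite ∧ InjOn (fun s ↦ (X.toFun s, Y.toFun s)) Sᶜ := by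
  refine ⟨_, hpar.union (hprop.biUnion fun p _ ↦ hprop.finite_fiber hpar p.1 p.2), ?_⟩
  intro s hs t ht hst
  simp only [compl_union, mem_inter_iff, mem_compl_iff, mem_ofPred_eq, mem_iUnion, not_not,
    not_exists] at hs ht
  obtain ⟨⟨hXs, hYs, hE⟩, hfiber⟩ := hs
  obtain ⟨⟨hXt, hYt, -⟩, -⟩ := ht
  obtain ⟨hXst, hYst⟩ := Prod.mk.inj hst
  have hs' : X.eval s = (X.toFun s : OnePoint ℂ) ∧ Y.eval s = (Y.toFun s : OnePoint ℂ) :=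
    ⟨X.eval_eq_coe_iff.mpr ⟨hXs, rfl⟩, Y.eval_eq_coe_iff.mpr ⟨hYs, rfl⟩⟩
  by_contra hne
  refine hfiber (X.toFun s, Y.toFun s) ⟨hE, fun hunique ↦ hne (hunique.unique hs' ?_)⟩ hs'
  exact ⟨X.eval_eq_coe_iff.mpr ⟨hXt, hXst.symm⟩, Y.eval_eq_coe_iff.mpr ⟨hYt, hYst.symm⟩⟩

theorem IsProper.deriv_ne_zero_of_eventuallyEq_comp (hprop : IsProper E X Y)
    (hpar : IsParametrization E X Y) {s : ℂ} (hX : X.den.eval s ≠ 0) {φ : ℂ → ℂ}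
    (hφ : Y.toFun =ᶠ[𝓝 s] φ ∘ X.toFun) : deriv X.toFun s ≠ 0 := by
  obtain ⟨S, hS, hinj⟩ := hprop.exists_finite_injOn_compl hpar
  have hU : Sᶜ ∩ {t | Y.toFun t = φ (X.toFun t)} ∈ 𝓝[≠] s :=
    inter_mem (nhdsNE_le_cofinite s hS.compl_mem_cofinite) (nhdsWithin_le_nhds hφ)
  refine deriv_ne_zero_of_injOn_nhdsNE (X.analyticAt_toFun hX) hU fun t ht u hu htu ↦ ?_
  exact hinj ht.1 hu.1 (Prod.ext htu (ht.2.trans ((congrArg φ htu).trans hu.2.symm)))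

end Parametrization

theorem statement16_general (E : MvPolynomial (Fin 2) ℂ)
    (X Y : RationalMap) (hpar : IsParametrization E X Y) (hprop : IsProper E X Y)
    (sstar : ℂ) (hfin : X.den.eval sstar ≠ 0) :
    ((∃ φ : ℂ → ℂ,
        ∀ᶠ t in nhds sstar, Y.eval t = ((φ (X.toFun t) : ℂ) : OnePoint ℂ)) ↔
      ¬ IsCriticalPt X Y sstar) ∧
    (∀ φ : ℂ → ℂ,
      (∀ᶠ t in nhds sstar, Y.eval t = ((φ (X.toFun t) : ℂ) : OnePoint ℂ)) →
      AnalyticAt ℂ φ (X.toFun sstar)) := by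
  have hX := X.analyticAt_toFun hfin
  have hderiv (φ : ℂ → ℂ) (hφ : Y.toFun =ᶠ[𝓝 sstar] φ ∘ X.toFun) : deriv X.toFun sstar ≠ 0 :=
    hprop.deriv_ne_zero_of_eventuallyEq_comp hpar hfin hφ
  simp only [RationalMap.eventually_eval_eq_coe_iff, isCriticalPt_iff_deriv_toFun_eq_zero hfin,
    not_or]
  refine ⟨⟨?_, ?_⟩, ?_⟩
  · rintro ⟨φ, hY, hφ⟩
    exact ⟨hderiv φ hφ, hY⟩
  · rintro ⟨hX', hY⟩
    obtain ⟨φ, hφ⟩ := exists_eventuallyEq_comp hX.hasStrictDerivAt hX' Y.toFun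
    exact ⟨φ, hY, hφ⟩
  · rintro φ ⟨hY, hφ⟩
    exact (analyticAt_comp_iff_of_deriv_ne_zero hX (hderiv φ hφ)).mp
      ((Y.analyticAt_toFun hY).congr hφ)

/-- Lemma `proper para` (ii): if `(X,Y)` is a proper rational
parametrization of the irreducible curve `E = 0` and `s* ∈ ℂ` with `X(s*) ≠ ∞`, then
`(P, s*)` parametrizes a finite-valued function `φ` locally if and only if `s*` is not a
critical point of `P`; in that case any such `φ` is analytic at `x* = X(s*)`. -/
theorem statement16 (E : MvPolynomial (Fin 2) ℂ) (hE : Irreducible E)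
    (X Y : RationalMap) (hpar : IsParametrization E X Y) (hprop : IsProper E X Y)
    (sstar : ℂ) (hfin : X.den.eval sstar ≠ 0) :
    ((∃ φ : ℂ → ℂ,
        ∀ᶠ t in nhds sstar, Y.eval t = ((φ (X.toFun t) : ℂ) : OnePoint ℂ)) ↔
      ¬ IsCriticalPt X Y sstar) ∧
    (∀ φ : ℂ → ℂ,
      (∀ᶠ t in nhds sstar, Y.eval t = ((φ (X.toFun t) : ℂ) : OnePoint ℂ)) →
      AnalyticAt ℂ φ (X.toFun sstar)) :=
  statement16_general E X Y hpar hprop sstar hfin
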